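/- arXiv:2204.00355 — 2 statements merged into one kernel-verified Lean document; each statement's English description precedes it below -/
import Mathlib

section
/- Let ρ ∈ (0,1], T > 0, τ > N/(2m), and suppose Σ_n (A(n)+1)^{2(τ+1)} |Ψ_n|² ≤ C_Ψ < ∞. Then the series f¹(x) = Σ_{n∈ℤ^N} Ψ_n / (T^ρ E_{ρ,ρ+1}(−A(n)T^ρ)) e^{inx} converges absolutely and uniformly on 𝕋^N, and ‖f¹‖²_{C(𝕋^N)} ≤ C · Σ_n (A(n)+1)^{2(τ+1)} |Ψ_n|². -/
open Filter

/-- The two-parameter Mittag-Leffler function `E_{ρ,μ}(z) = Σ_{k=0}^∞ z^k / Γ(ρk+μ)`. -/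
noncomputable def mittagLeffler (ρ μ z : ℝ) : ℝ :=
  ∑' k : ℕ, z ^ k / Real.Gamma (ρ * k + μ)

/-- The character `x ↦ e^{i n·x}` on the `N`-dimensional torus, `n ∈ ℤ^N`. -/
noncomputable def charFun {N : ℕ} (n : Fin N → ℤ) (x : Fin N → ℝ) : ℂ :=
  Complex.exp (Complex.I * ∑ i, (n i : ℂ) * (x i : ℂ))

lemma ml_kint {ρ : ℝ} (hρ : 0 < ρ) (t a b : ℝ) :
    IntervalIntegrable (fun s => (t - s) ^ (ρ - 1)) MeasureTheory.volume a b := by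
  have h := (intervalIntegral.intervalIntegrable_rpow' (a := t - a) (b := t - b)
    (r := ρ - 1) (by linarith)).comp_sub_left t
  simpa using h

lemma ml_kuint {ρ : ℝ} (hρ : 0 < ρ) {u : ℝ → ℝ} (hu : Continuous u) (t a b : ℝ) :
    IntervalIntegrable (fun s => (t - s) ^ (ρ - 1) * u s) MeasureTheory.volume a b :=
  (ml_kint hρ t a b).mul_continuousOn hu.continuousOn

lemma ml_kval {ρ : ℝ} (hρ : 0 < ρ) (t a : ℝ) :
    ∫ s in a..t, (t - s) ^ (ρ - 1) = (t - a) ^ ρ / ρ := by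
  rw [intervalIntegral.integral_comp_sub_left (fun x => x ^ (ρ - 1)) t,
    integral_rpow (Or.inl (by linarith))]
  simp [Real.zero_rpow hρ.ne']

lemma ml_kval2 {ρ : ℝ} (hρ : 0 < ρ) (t a b : ℝ) :
    ∫ s in a..b, (t - s) ^ (ρ - 1) = ((t - a) ^ ρ - (t - b) ^ ρ) / ρ := by
  rw [intervalIntegral.integral_comp_sub_left (fun x => x ^ (ρ - 1)) t,
    integral_rpow (Or.inl (by linarith))]
  simp

lemma ml_kmono {ρ : ℝ} (hρ1 : ρ ≤ 1) {s t t' : ℝ} (h : s < t) (h' : t ≤ t') :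
    (t' - s) ^ (ρ - 1) ≤ (t - s) ^ (ρ - 1) :=
  Real.rpow_le_rpow_of_nonpos (by linarith) (by linarith) (by linarith)

lemma volterra_nonneg {ρ g : ℝ} (hρ : 0 < ρ) (hρ1 : ρ ≤ 1) (hg : 0 < g) {u : ℝ → ℝ}
    (hu : Continuous u)
    (h : ∀ t, 0 ≤ t → u t = 1 - g * ∫ s in (0:ℝ)..t, (t - s) ^ (ρ - 1) * u s) :
    ∀ t, 0 ≤ t → 0 ≤ u t := by
  by_contra! hcon
  obtain ⟨t1, ht1, hut1⟩ := hcon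
  set S : Set ℝ := {t | 0 ≤ t ∧ u t ≤ 0} with hS
  have hSc : IsClosed S := by
    apply IsClosed.inter
    · exact isClosed_le continuous_const continuous_id
    · exact isClosed_le hu continuous_const
  have hSb : BddBelow S := ⟨0, fun x hx => hx.1⟩
  have hmem : sInf S ∈ S := hSc.csInf_mem ⟨t1, ht1, hut1.le⟩ hSb
  obtain ⟨t0, ht0⟩ : ∃ t0, t0 = sInf S := ⟨_, rfl⟩
  rw [← ht0] at hmem
  have hpos : ∀ s, 0 ≤ s → s < t0 → 0 < u s := by
    intro s hs hst
    by_contra! hc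
    have := csInf_le hSb (show s ∈ S from ⟨hs, hc⟩)
    linarith
  have hu0 : u 0 = 1 := by simpa using h 0 le_rfl
  have ht0pos : 0 < t0 := by
    rcases hmem.1.eq_or_lt with h1 | h1
    · have := hmem.2
      rw [← h1, hu0] at this
      linarith
    · exact h1
  set ε : ℝ := (ρ / (2 * g)) ^ (1 / ρ) with hε
  have hεpos : 0 < ε := by positivity
  have hερ : ε ^ ρ = ρ / (2 * g) := by
    rw [hε, ← Real.rpow_mul (by positivity), one_div_mul_cancel hρ.ne', Real.rpow_one]
  have ha : max 0 (t0 - ε) < t0 := max_lt ht0pos (by linarith)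
  obtain ⟨t, htm, htmax⟩ := (isCompact_Icc (a := max 0 (t0 - ε)) (b := t0)).exists_isMaxOn
    (Set.nonempty_Icc.2 ha.le) hu.continuousOn
  have hmax : ∀ s, max 0 (t0 - ε) ≤ s → s ≤ t0 → u s ≤ u t := fun s h1 h2 => htmax ⟨h1, h2⟩
  have hutpos : 0 < u t := lt_of_lt_of_le (hpos _ (le_max_left _ _) ha) (hmax _ le_rfl ha.le)
  have htlt : t < t0 := by
    rcases htm.2.eq_or_lt with h1 | h1
    · rw [h1] at hutpos; linarith [hmem.2]
    · exact h1
  have ht0' : 0 ≤ t := (le_max_left _ _).trans htm.1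
  have htε : t0 - t ≤ ε := by linarith [(le_max_right 0 (t0 - ε)).trans htm.1]
  have e1 := h t0 ht0pos.le
  have e2 := h t ht0'
  rw [← intervalIntegral.integral_add_adjacent_intervals (ml_kuint hρ hu t0 0 t)
    (ml_kuint hρ hu t0 t t0)] at e1
  have i1 : ∫ s in (0:ℝ)..t, (t0 - s) ^ (ρ - 1) * u s ≤ ∫ s in (0:ℝ)..t, (t - s) ^ (ρ - 1) * u s := by
    apply intervalIntegral.integral_mono_on_of_le_Ioo ht0' (ml_kuint hρ hu t0 0 t)
      (ml_kuint hρ hu t 0 t)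
    intro s hs
    exact mul_le_mul_of_nonneg_right (ml_kmono hρ1 hs.2 htlt.le) (hpos s hs.1.le (hs.2.trans htlt)).le
  have i2 : ∫ s in t..t0, (t0 - s) ^ (ρ - 1) * u s ≤ (t0 - t) ^ ρ / ρ * u t := by
    rw [← ml_kval hρ, ← intervalIntegral.integral_mul_const]
    apply intervalIntegral.integral_mono_on_of_le_Ioo htlt.le (ml_kuint hρ hu t0 t t0)
      ((ml_kint hρ t0 t t0).mul_const _)
    intro s hs
    exact mul_le_mul_of_nonneg_left (hmax s (htm.1.trans hs.1.le) hs.2.le)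
      (Real.rpow_nonneg (by linarith [hs.2]) _)
  have i3 : (t0 - t) ^ ρ ≤ ρ / (2 * g) := by
    rw [← hερ]
    exact Real.rpow_le_rpow (by linarith) htε hρ.le
  have i4 : g * ((t0 - t) ^ ρ / ρ * u t) ≤ 1 / 2 * u t := by
    have : g * ((t0 - t) ^ ρ / ρ) ≤ g * ((ρ / (2 * g)) / ρ) := by gcongr
    have h2 : g * ((ρ / (2 * g)) / ρ) = 1 / 2 := by field_simp
    rw [h2] at this
    nlinarith
  have i5 := mul_le_mul_of_nonneg_left i1 hg.le
  have i6 := mul_le_mul_of_nonneg_left i2 hg.le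
  have := hmem.2
  rw [mul_add] at e1
  linarith

lemma volterra_lower {ρ g : ℝ} (hρ : 0 < ρ) (hρ1 : ρ ≤ 1) (hg : 0 < g) {u : ℝ → ℝ}
    (hu : Continuous u)
    (h : ∀ t, 0 ≤ t → u t = 1 - g * ∫ s in (0:ℝ)..t, (t - s) ^ (ρ - 1) * u s) :
    ∃ c > 0, ∀ t, 0 ≤ t → c * (min t 1) ^ ρ ≤ 1 - u t := by
  have hnn := volterra_nonneg hρ hρ1 hg hu h
  have hint : ∀ t a b, 0 ≤ a → a ≤ b → b ≤ t → 0 ≤ ∫ s in a..b, (t - s) ^ (ρ - 1) * u s := by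
    intro t a b ha hab hbt
    apply intervalIntegral.integral_nonneg hab
    intro s hs
    exact mul_nonneg (Real.rpow_nonneg (by linarith [hs.2]) _) (hnn s (ha.trans hs.1))
  have hle1 : ∀ t, 0 ≤ t → u t ≤ 1 := by
    intro t ht
    have := mul_nonneg hg.le (hint t 0 t le_rfl ht le_rfl)
    linarith [h t ht]
  -- one-sided Hölder bound
  have hol : ∀ s t, 0 ≤ s → s ≤ t → u t - g * ((t - s) ^ ρ / ρ) ≤ u s := by
    intro s t hs hst
    have ht : 0 ≤ t := hs.trans hst
    have e1 := h t ht
    have e2 := h s hs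
    rw [← intervalIntegral.integral_add_adjacent_intervals (ml_kuint hρ hu t 0 s)
      (ml_kuint hρ hu t s t)] at e1
    have p1 := hint t s t hs hst le_rfl
    have p2 : ∫ r in (0:ℝ)..s, ((s - r) ^ (ρ - 1) * u r - (t - r) ^ (ρ - 1) * u r) ≤
        ∫ r in (0:ℝ)..s, ((s - r) ^ (ρ - 1) - (t - r) ^ (ρ - 1)) := by
      apply intervalIntegral.integral_mono_on_of_le_Ioo hs
        ((ml_kuint hρ hu s 0 s).sub (ml_kuint hρ hu t 0 s))
        ((ml_kint hρ s 0 s).sub (ml_kint hρ t 0 s))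
      intro r hr
      have := ml_kmono hρ1 hr.2 hst
      have := hle1 r hr.1.le
      nlinarith
    rw [intervalIntegral.integral_sub (ml_kuint hρ hu s 0 s) (ml_kuint hρ hu t 0 s),
      intervalIntegral.integral_sub (ml_kint hρ s 0 s) (ml_kint hρ t 0 s),
      ml_kval2 hρ, ml_kval2 hρ] at p2
    simp only [sub_self, Real.zero_rpow hρ.ne', sub_zero] at p2
    have p3 : s ^ ρ / ρ - (t ^ ρ - (t - s) ^ ρ) / ρ ≤ (t - s) ^ ρ / ρ := by
      rw [← sub_div]
      have := Real.rpow_le_rpow hs hst hρ.le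
      gcongr
      linarith
    have p4 := mul_le_mul_of_nonneg_left (p2.trans p3) hg.le
    have p5 := mul_nonneg hg.le p1
    rw [mul_add] at e1
    rw [mul_sub] at p4
    linarith
  set κ : ℝ := min 1 ((ρ / (4 * g)) ^ (1 / ρ)) with hκ
  have hκpos : 0 < κ := by positivity
  have hκ1 : κ ≤ 1 := min_le_left _ _
  have hκρ : g * (κ ^ ρ / ρ) ≤ 1 / 4 := by
    have : κ ^ ρ ≤ ρ / (4 * g) := by
      calc κ ^ ρ ≤ ((ρ / (4 * g)) ^ (1 / ρ)) ^ ρ :=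
            Real.rpow_le_rpow hκpos.le (min_le_right _ _) hρ.le
        _ = ρ / (4 * g) := by
            rw [← Real.rpow_mul (by positivity), one_div_mul_cancel hρ.ne', Real.rpow_one]
    calc g * (κ ^ ρ / ρ) ≤ g * ((ρ / (4 * g)) / ρ) := by gcongr
      _ = 1 / 4 := by field_simp
  refine ⟨3 / 5 * (g * (κ ^ ρ / ρ)), by positivity, fun t ht => ?_⟩
  have hm0 : 0 ≤ min t 1 := le_min ht zero_le_one
  set δ : ℝ := κ * min t 1 with hδ
  have hδ0 : 0 ≤ δ := by positivity
  have hδt : δ ≤ t := by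
    calc δ ≤ 1 * min t 1 := mul_le_mul_of_nonneg_right hκ1 hm0
      _ ≤ t := by simp
  set q : ℝ := g * (δ ^ ρ / ρ) with hq
  have hqe : q = g * (κ ^ ρ / ρ) * (min t 1) ^ ρ := by
    rw [hq, hδ, Real.mul_rpow hκpos.le hm0]; ring
  have hq0 : 0 ≤ q := by positivity
  have hq4 : q ≤ 1 / 4 := by
    rw [hqe]
    have : (min t 1) ^ ρ ≤ 1 := Real.rpow_le_one hm0 (min_le_right _ _) hρ.le
    have h0 : 0 ≤ (min t 1) ^ ρ := by positivity
    nlinarith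
  have e1 := h t ht
  rw [← intervalIntegral.integral_add_adjacent_intervals (ml_kuint hρ hu t 0 (t - δ))
      (ml_kuint hρ hu t (t - δ) t)] at e1
  have p1 := hint t 0 (t - δ) le_rfl (by linarith) (by linarith)
  have p2 : δ ^ ρ / ρ * (u t - q) ≤ ∫ s in (t - δ)..t, (t - s) ^ (ρ - 1) * u s := by
    have := ml_kval hρ t (t - δ)
    rw [sub_sub_cancel] at this
    rw [← this, ← intervalIntegral.integral_mul_const]
    apply intervalIntegral.integral_mono_on_of_le_Ioo (by linarith)
      ((ml_kint hρ t _ _).mul_const _) (ml_kuint hρ hu t _ _)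
    intro s hs
    apply mul_le_mul_of_nonneg_left _ (Real.rpow_nonneg (by linarith [hs.2]) _)
    have h1 := hol s t (by linarith [hs.1]) hs.2.le
    have h2 : g * ((t - s) ^ ρ / ρ) ≤ q := by
      rw [hq]
      have : (t - s) ^ ρ ≤ δ ^ ρ := Real.rpow_le_rpow (by linarith [hs.2]) (by linarith [hs.1]) hρ.le
      gcongr
    linarith
  have p3 := mul_le_mul_of_nonneg_left p2 hg.le
  rw [← mul_assoc, ← hq] at p3
  have p4 := mul_nonneg hg.le p1
  rw [mul_add] at e1
  have goal' : 3 / 5 * q ≤ 1 - u t := by nlinarith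
  rw [hqe] at goal'
  linarith

lemma ml_gamma_lower {x M : ℝ} (hx : 1 ≤ x) (hM : 0 < M) :
    M ^ (x - 1) * Real.exp (-M) ≤ Real.Gamma x := by
  rw [Real.Gamma_eq_integral (by linarith), ← integral_exp_neg_Ioi M,
    ← MeasureTheory.integral_const_mul]
  have hi := Real.GammaIntegral_convergent (s := x) (by linarith)
  calc ∫ t in Set.Ioi M, M ^ (x - 1) * Real.exp (-t)
      ≤ ∫ t in Set.Ioi M, Real.exp (-t) * t ^ (x - 1) := by
        apply MeasureTheory.setIntegral_mono_on
        · exact (integrableOn_exp_neg_Ioi M).const_mul _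
        · exact hi.mono_set (Set.Ioi_subset_Ioi hM.le)
        · exact measurableSet_Ioi
        · intro t ht
          rw [mul_comm]
          exact mul_le_mul_of_nonneg_left
            (Real.rpow_le_rpow hM.le (le_of_lt ht) (by linarith)) (Real.exp_pos _).le
    _ ≤ _ := by
        apply MeasureTheory.setIntegral_mono_set hi
        · filter_upwards [MeasureTheory.ae_restrict_mem measurableSet_Ioi] with t ht
          exact mul_nonneg (Real.exp_pos _).le (Real.rpow_nonneg (le_of_lt ht) _)
        · exact (Set.Ioi_subset_Ioi hM.le).eventuallyLE

lemma ml_gamma_pos {ρ μ : ℝ} (hρ : 0 < ρ) (hμ : 1 ≤ μ) (k : ℕ) :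
    0 < Real.Gamma (ρ * k + μ) := Real.Gamma_pos_of_pos (by positivity)

lemma ml_summable {ρ μ : ℝ} (hρ : 0 < ρ) (hμ : 1 ≤ μ) {x : ℝ} (hx : 0 ≤ x) :
    Summable (fun k : ℕ => x ^ k / Real.Gamma (ρ * k + μ)) := by
  set M : ℝ := (2 * (x + 1)) ^ (1 / ρ) with hM
  have hMpos : 0 < M := by positivity
  have hMρ : M ^ ρ = 2 * (x + 1) := by
    rw [hM, ← Real.rpow_mul (by positivity), one_div_mul_cancel hρ.ne', Real.rpow_one]
  have hg : Summable (fun k : ℕ => (Real.exp M * M ^ (1 - μ)) * (1 / 2 : ℝ) ^ k) :=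
    (summable_geometric_of_lt_one (by norm_num) (by norm_num)).mul_left _
  refine Summable.of_nonneg_of_le (fun k => ?_) (fun k => ?_) hg
  · have := ml_gamma_pos hρ hμ k
    positivity
  · have h1 := ml_gamma_lower (x := ρ * k + μ) (M := M) (by nlinarith [mul_nonneg hρ.le (Nat.cast_nonneg (α := ℝ) k)]) hMpos
    rw [div_le_iff₀ (ml_gamma_pos hρ hμ k)]
    have e : M ^ (ρ * k + μ - 1) = (2 * (x + 1)) ^ k * M ^ (μ - 1) := by
      rw [← hMρ, ← Real.rpow_natCast, ← Real.rpow_mul hMpos.le, ← Real.rpow_add hMpos]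
      ring_nf
    rw [e] at h1
    have e2 : M ^ (1 - μ) * M ^ (μ - 1) = 1 := by
      rw [← Real.rpow_add hMpos]; simp
    have e3 : Real.exp M * Real.exp (-M) = 1 := by rw [← Real.exp_add]; simp
    calc x ^ k ≤ (x + 1) ^ k := by gcongr; linarith
      _ = (1 / 2 : ℝ) ^ k * (2 * (x + 1)) ^ k * (M ^ (1 - μ) * M ^ (μ - 1)) *
          (Real.exp M * Real.exp (-M)) := by
          rw [e2, e3, ← mul_pow]; ring_nf
      _ = (Real.exp M * M ^ (1 - μ)) * (1 / 2 : ℝ) ^ k *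
          ((2 * (x + 1)) ^ k * M ^ (μ - 1) * Real.exp (-M)) := by ring
      _ ≤ _ := by gcongr

lemma ml_norm_term {ρ μ : ℝ} (hρ : 0 < ρ) (hμ : 1 ≤ μ) (x : ℝ) (k : ℕ) :
    ‖x ^ k / Real.Gamma (ρ * k + μ)‖ = |x| ^ k / Real.Gamma (ρ * k + μ) := by
  rw [norm_div, norm_pow, Real.norm_eq_abs, Real.norm_of_nonneg (ml_gamma_pos hρ hμ k).le]

lemma ml_summable' {ρ μ : ℝ} (hρ : 0 < ρ) (hμ : 1 ≤ μ) (x : ℝ) :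
    Summable (fun k : ℕ => x ^ k / Real.Gamma (ρ * k + μ)) := by
  apply Summable.of_norm
  simp_rw [ml_norm_term hρ hμ]
  exact ml_summable hρ hμ (abs_nonneg x)

lemma ml_continuous {ρ μ : ℝ} (hρ : 0 < ρ) (hμ : 1 ≤ μ) : Continuous (mittagLeffler ρ μ) := by
  rw [continuous_iff_continuousAt]
  intro x
  have : ContinuousOn (mittagLeffler ρ μ) (Metric.ball 0 (|x| + 1)) := by
    unfold mittagLeffler
    apply continuousOn_tsum (u := fun k : ℕ => (|x| + 1) ^ k / Real.Gamma (ρ * k + μ))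
    · intro k; fun_prop
    · exact ml_summable hρ hμ (by positivity)
    · intro k y hy
      rw [ml_norm_term hρ hμ]
      have hy' : |y| ≤ |x| + 1 := by
        have := hy
        simp at this
        exact this.le
      have := ml_gamma_pos hρ hμ k
      gcongr
  exact this.continuousAt (Metric.isOpen_ball.mem_nhds (by simp))

lemma ml_recur {ρ : ℝ} (hρ : 0 < ρ) (z : ℝ) :
    mittagLeffler ρ 1 z = 1 + z * mittagLeffler ρ (ρ + 1) z := by
  unfold mittagLeffler
  rw [(ml_summable' hρ le_rfl z).tsum_eq_zero_add, ← tsum_mul_left]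
  congr 1
  · simp
  · apply tsum_congr
    intro k
    rw [show ρ * ((k + 1 : ℕ) : ℝ) + 1 = ρ * k + (ρ + 1) by push_cast; ring]
    ring

lemma ml_beta {ρ : ℝ} (hρ : 0 < ρ) {t : ℝ} (ht : 0 < t) (k : ℕ) :
    ∫ s in (0:ℝ)..t, (t - s) ^ (ρ - 1) * (s ^ ρ) ^ k =
      Real.Gamma ρ * Real.Gamma (ρ * k + 1) * ((t ^ ρ) ^ (k + 1) / Real.Gamma (ρ * k + (ρ + 1))) := by
  have hk : 0 < ρ * k + 1 := by positivity
  have h1 := Complex.betaIntegral_scaled ((ρ * k + 1 : ℝ) : ℂ) (ρ : ℂ) ht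
  rw [Complex.betaIntegral_eq_Gamma_mul_div _ _ (by simpa using hk) (by simpa using hρ)] at h1
  apply Complex.ofReal_injective
  rw [← intervalIntegral.integral_ofReal]
  have h2 : ∫ s in (0:ℝ)..t, (((t - s) ^ (ρ - 1) * (s ^ ρ) ^ k : ℝ) : ℂ) =
      ∫ x in (0:ℝ)..t, (x : ℂ) ^ (((ρ * k + 1 : ℝ) : ℂ) - 1) * ((t : ℂ) - x) ^ ((ρ : ℂ) - 1) := by
    apply intervalIntegral.integral_congr
    intro s hs
    rw [Set.uIcc_of_le ht.le] at hs
    have e1 : (s : ℂ) ^ (((ρ * k + 1 : ℝ) : ℂ) - 1) = (((s ^ ρ) ^ k : ℝ) : ℂ) := by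
      rw [← Real.rpow_natCast, ← Real.rpow_mul hs.1, Complex.ofReal_cpow hs.1]
      push_cast; ring_nf
    have e2 : ((t : ℂ) - s) ^ ((ρ : ℂ) - 1) = (((t - s) ^ (ρ - 1) : ℝ) : ℂ) := by
      rw [Complex.ofReal_cpow (by linarith [hs.2])]
      push_cast; rfl
    simp only [e1, e2]
    push_cast; ring
  have e3 : (t : ℂ) ^ (((ρ * k + 1 : ℝ) : ℂ) + ρ - 1) = (((t ^ ρ) ^ (k + 1) : ℝ) : ℂ) := by
    rw [← Real.rpow_natCast, ← Real.rpow_mul ht.le, Complex.ofReal_cpow ht.le]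
    push_cast; ring_nf
  refine h2.trans (h1.trans ?_)
  rw [e3, ← Complex.ofReal_add, Complex.Gamma_ofReal, Complex.Gamma_ofReal, Complex.Gamma_ofReal,
    show ρ * k + 1 + ρ = ρ * k + (ρ + 1) by ring]
  push_cast
  ring

lemma ml_volterra {ρ : ℝ} (hρ : 0 < ρ) {t : ℝ} (ht : 0 ≤ t) :
    mittagLeffler ρ 1 (-(t ^ ρ)) = 1 - 1 / Real.Gamma ρ *
      ∫ s in (0:ℝ)..t, (t - s) ^ (ρ - 1) * mittagLeffler ρ 1 (-(s ^ ρ)) := by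
  rcases ht.eq_or_lt with h0 | ht
  · subst h0
    rw [ml_recur hρ]
    simp [Real.zero_rpow hρ.ne']
  have hΓ : 0 < Real.Gamma ρ := Real.Gamma_pos_of_pos hρ
  have hG := ml_gamma_pos hρ (le_refl (1:ℝ))
  have hG' := ml_gamma_pos hρ (show (1:ℝ) ≤ ρ + 1 by linarith)
  set F : ℕ → ℝ → ℝ := fun k s => (t - s) ^ (ρ - 1) * ((-(s ^ ρ)) ^ k / Real.Gamma (ρ * k + 1))
    with hF
  have hFe : ∀ k s, F k s = ((-1) ^ k / Real.Gamma (ρ * k + 1)) * ((t - s) ^ (ρ - 1) * (s ^ ρ) ^ k) := by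
    intro k s
    simp only [hF]
    rw [neg_pow]; ring
  have hFi : ∀ k, ∫ s in Set.Ioc 0 t, F k s =
      Real.Gamma ρ * ((-1) ^ k * ((t ^ ρ) ^ (k + 1) / Real.Gamma (ρ * k + (ρ + 1)))) := by
    intro k
    rw [← intervalIntegral.integral_of_le ht.le]
    simp_rw [hFe]
    rw [intervalIntegral.integral_const_mul, ml_beta hρ ht]
    have := (hG k).ne'
    field_simp
  have hFn : ∀ k, ∫ s in Set.Ioc 0 t, ‖F k s‖ =
      Real.Gamma ρ * ((t ^ ρ) ^ (k + 1) / Real.Gamma (ρ * k + (ρ + 1))) := by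
    intro k
    have : ∫ s in Set.Ioc 0 t, ‖F k s‖ = ∫ s in Set.Ioc 0 t,
        (1 / Real.Gamma (ρ * k + 1)) * ((t - s) ^ (ρ - 1) * (s ^ ρ) ^ k) := by
      apply MeasureTheory.setIntegral_congr_fun measurableSet_Ioc
      intro s hs
      have h1 : 0 ≤ (t - s) ^ (ρ - 1) * (s ^ ρ) ^ k :=
        mul_nonneg (Real.rpow_nonneg (by linarith [hs.2]) _)
          (pow_nonneg (Real.rpow_nonneg hs.1.le _) _)
      simp only [hFe]
      rw [norm_mul, norm_div, norm_pow, norm_neg, norm_one, one_pow, Real.norm_of_nonneg (hG k).le,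
        Real.norm_of_nonneg h1]
    rw [this, ← intervalIntegral.integral_of_le ht.le, intervalIntegral.integral_const_mul,
      ml_beta hρ ht]
    have := (hG k).ne'
    field_simp
  have hint : ∀ k, MeasureTheory.Integrable (F k) (MeasureTheory.volume.restrict (Set.Ioc 0 t)) := by
    intro k
    have : IntervalIntegrable (F k) MeasureTheory.volume 0 t := by
      apply ml_kuint hρ
      have : Continuous fun s : ℝ => s ^ ρ := Real.continuous_rpow_const hρ.le
      fun_prop
    exact this.1
  have hsum := MeasureTheory.hasSum_integral_of_summable_integral_norm hint (by
    simp_rw [hFn]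
    apply Summable.mul_left
    have := (ml_summable hρ (show (1:ℝ) ≤ ρ + 1 by linarith) (x := t ^ ρ) (by positivity)).mul_left (t ^ ρ)
    refine this.congr fun k => ?_
    ring)
  have htsum : ∀ s, ∑' k, F k s = (t - s) ^ (ρ - 1) * mittagLeffler ρ 1 (-(s ^ ρ)) := by
    intro s
    simp only [hF, mittagLeffler]
    rw [tsum_mul_left]
  simp_rw [htsum, hFi] at hsum
  rw [← intervalIntegral.integral_of_le ht.le] at hsum
  rw [← hsum.tsum_eq, tsum_mul_left, ml_recur hρ, mittagLeffler, ← mul_assoc,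
    one_div_mul_cancel hΓ.ne', one_mul, ← tsum_mul_left, sub_eq_add_neg, ← tsum_neg]
  congr 1
  apply tsum_congr
  intro k
  rw [neg_pow]
  ring

lemma ml_lower {ρ : ℝ} (hρ : 0 < ρ) (hρ1 : ρ ≤ 1) :
    ∃ c > 0, ∀ x, 0 ≤ x → c ≤ (1 + x) * mittagLeffler ρ (ρ + 1) (-x) := by
  have hcont : Continuous fun t : ℝ => mittagLeffler ρ 1 (-(t ^ ρ)) :=
    (ml_continuous hρ le_rfl).comp (Real.continuous_rpow_const hρ.le).neg
  obtain ⟨c, hc, h⟩ := volterra_lower hρ hρ1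
    (one_div_pos.2 (Real.Gamma_pos_of_pos hρ)) hcont (fun t ht => ml_volterra hρ ht)
  have hG : 0 < Real.Gamma (ρ + 1) := Real.Gamma_pos_of_pos (by linarith)
  refine ⟨min c (1 / Real.Gamma (ρ + 1)), by positivity, fun x hx => ?_⟩
  rcases hx.eq_or_lt with h0 | hx
  · subst h0
    refine (min_le_right _ _).trans (le_of_eq ?_)
    unfold mittagLeffler
    rw [tsum_eq_single 0]
    · simp
    · intro k hk; simp [hk]
  refine (min_le_left _ _).trans ?_
  have h1 := h (x ^ (1 / ρ)) (by positivity)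
  have e : (x ^ (1 / ρ)) ^ ρ = x := by
    rw [← Real.rpow_mul hx.le, one_div_mul_cancel hρ.ne', Real.rpow_one]
  simp only [e] at h1
  rw [ml_recur hρ] at h1
  have h2 : c * (min (x ^ (1 / ρ)) 1) ^ ρ ≤ x * mittagLeffler ρ (ρ + 1) (-x) := by linarith
  have h3 : (min (x ^ (1 / ρ)) 1) ^ ρ = min x 1 := by
    rcases le_total (x ^ (1 / ρ)) 1 with h4 | h4
    · rw [min_eq_left h4, e, min_eq_left]
      rw [← e]; exact Real.rpow_le_one (by positivity) h4 hρ.le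
    · rw [min_eq_right h4, Real.one_rpow, min_eq_right]
      rw [← e]; exact Real.one_le_rpow h4 hρ.le
  rw [h3] at h2
  set E := mittagLeffler ρ (ρ + 1) (-x)
  rcases le_total x 1 with h4 | h4
  · rw [min_eq_left h4] at h2
    have : c ≤ E := by
      by_contra! hc'
      nlinarith
    nlinarith
  · rw [min_eq_right h4] at h2
    have : 0 < E := by
      by_contra! hc'
      nlinarith
    nlinarith

lemma ml_cs {ι : Type*} {f g : ι → ℝ} (hf : ∀ i, 0 ≤ f i) (hg : ∀ i, 0 ≤ g i)
    (sf : Summable fun i => f i ^ 2) (sg : Summable fun i => g i ^ 2) :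
    (Summable fun i => f i * g i) ∧
      (∑' i, f i * g i) ^ 2 ≤ (∑' i, f i ^ 2) * ∑' i, g i ^ 2 := by
  have h := Real.summable_and_inner_le_Lp_mul_Lq_tsum_of_nonneg (p := 2) (q := 2)
    Real.HolderConjugate.two_two hf hg (by simpa using sf) (by simpa using sg)
  refine ⟨h.1, ?_⟩
  have h2 := h.2
  simp only [Real.rpow_ofNat] at h2
  rw [← Real.sqrt_eq_rpow, ← Real.sqrt_eq_rpow] at h2
  have h0 : 0 ≤ ∑' i, f i * g i := tsum_nonneg fun i => mul_nonneg (hf i) (hg i)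
  calc (∑' i, f i * g i) ^ 2 ≤ (√(∑' i, f i ^ 2) * √(∑' i, g i ^ 2)) ^ 2 := by gcongr
    _ = _ := by
      rw [mul_pow, Real.sq_sqrt (tsum_nonneg fun i => sq_nonneg _),
        Real.sq_sqrt (tsum_nonneg fun i => sq_nonneg _)]

lemma ml_lattice_aux (N : ℕ) (r : ℝ) (hr : r < -N) (L : Submodule ℤ (Fin N → ℝ))
    [DiscreteTopology L] (hrank : Module.finrank ℤ L = N)
    (hmem : ∀ n : Fin N → ℤ, (fun i => (n i : ℝ) : Fin N → ℝ) ∈ L) :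
    Summable fun n : Fin N → ℤ => ‖(fun i => (n i : ℝ) : Fin N → ℝ)‖ ^ r := by
  have hr' : r < -(Module.finrank ℤ L : ℝ) := hrank.symm ▸ hr
  have hs := ZLattice.summable_norm_rpow L r hr'
  have hinj : Function.Injective (fun n : Fin N → ℤ => (⟨fun i => (n i : ℝ), hmem n⟩ : L)) := by
    intro n n' h
    ext i
    have h2 : (fun i => (n i : ℝ) : Fin N → ℝ) = fun i => (n' i : ℝ) := congrArg Subtype.val h
    have h3 : (n i : ℝ) = (n' i : ℝ) := congrFun h2 i
    exact Int.cast_injective h3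
  have h4 := hs.comp_injective hinj
  refine h4.congr fun n => ?_
  simp only [Function.comp_apply, Submodule.coe_norm]

lemma ml_lattice_rank (N : ℕ) : Module.finrank ℤ
      (Submodule.span ℤ (Set.range (Pi.basisFun ℝ (Fin N)))) = N := by
  have h := ZLattice.rank ℝ (Submodule.span ℤ (Set.range (Pi.basisFun ℝ (Fin N))))
  rw [h]; simp

lemma ml_lattice_mem (N : ℕ) (n : Fin N → ℤ) : (fun i => (n i : ℝ) : Fin N → ℝ) ∈
      Submodule.span ℤ (Set.range (Pi.basisFun ℝ (Fin N))) := by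
  have : (fun i => (n i : ℝ) : Fin N → ℝ) = ∑ i, n i • Pi.basisFun ℝ (Fin N) i := by
    ext j
    simp [Finset.sum_apply, Pi.single_apply]
  rw [this]
  exact Submodule.sum_mem _ fun i _ => Submodule.smul_mem _ _ (Submodule.subset_span ⟨i, rfl⟩)

lemma ml_lattice (N : ℕ) (r : ℝ) (hr : r < -N) :
    Summable fun n : Fin N → ℤ => ‖(fun i => (n i : ℝ) : Fin N → ℝ)‖ ^ r :=
  ml_lattice_aux N r hr _ (ml_lattice_rank N) (ml_lattice_mem N)

lemma ml_symbol_summable (N m : ℕ) (hm : 0 < m) (c₁ : ℝ) (hc₁ : 0 < c₁)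
    (A : (Fin N → ℤ) → ℝ) (hA0 : ∀ n, 0 ≤ A n)
    (hA : ∀ n, c₁ * Real.sqrt (∑ i, ((n i : ℝ)) ^ 2) ^ (m : ℕ) ≤ A n)
    (τ : ℝ) (hτ : (N : ℝ) / (2 * m) < τ) :
    Summable fun n => (A n + 1) ^ (-(2 * τ)) := by
  have hm' : (0 : ℝ) < m := by exact_mod_cast hm
  have hτ0 : 0 < τ := lt_of_le_of_lt (by positivity) hτ
  have hr : -(2 * τ * m) < -(N : ℝ) := by
    rw [div_lt_iff₀ (by positivity)] at hτ
    linarith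
  refine Summable.of_norm_bounded_eventually
    ((ml_lattice N _ hr).mul_left (c₁ ^ (-(2 * τ)))) ?_
  have : {(0 : Fin N → ℤ)}ᶜ ∈ (cofinite : Filter (Fin N → ℤ)) :=
    (Set.finite_singleton 0).compl_mem_cofinite
  filter_upwards [this] with n hn
  have hpos : 0 < ‖(fun i => (n i : ℝ) : Fin N → ℝ)‖ := by
    rw [norm_pos_iff]
    intro h
    apply hn
    ext i
    have := congrFun h i
    simpa using this
  have hle : ‖(fun i => (n i : ℝ) : Fin N → ℝ)‖ ≤ Real.sqrt (∑ i, ((n i : ℝ)) ^ 2) := by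
    rw [pi_norm_le_iff_of_nonneg (Real.sqrt_nonneg _)]
    intro i
    rw [Real.norm_eq_abs]
    apply Real.abs_le_sqrt
    exact Finset.single_le_sum (f := fun i => ((n i : ℝ)) ^ 2) (fun i _ => sq_nonneg _)
      (Finset.mem_univ i)
  set q := ‖(fun i => (n i : ℝ) : Fin N → ℝ)‖
  have h1 : c₁ * q ^ m ≤ A n + 1 := by
    have : c₁ * q ^ m ≤ c₁ * Real.sqrt (∑ i, ((n i : ℝ)) ^ 2) ^ m := by gcongr
    linarith [hA n]
  rw [Real.norm_of_nonneg (Real.rpow_nonneg (by linarith [hA0 n]) _)]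
  calc (A n + 1) ^ (-(2 * τ)) ≤ (c₁ * q ^ m) ^ (-(2 * τ)) :=
        Real.rpow_le_rpow_of_nonpos (by positivity) h1 (by linarith)
    _ = c₁ ^ (-(2 * τ)) * q ^ (-(2 * τ * m)) := by
        rw [Real.mul_rpow hc₁.le (by positivity), ← Real.rpow_natCast, ← Real.rpow_mul hpos.le]
        ring_nf

lemma ml_char_norm {N : ℕ} (n : Fin N → ℤ) (x : Fin N → ℝ) : ‖charFun n x‖ = 1 := by
  unfold charFun
  have : Complex.I * ∑ i, (n i : ℂ) * (x i : ℂ) =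
      ((∑ i, (n i : ℝ) * x i : ℝ) : ℂ) * Complex.I := by
    push_cast; ring
  rw [this, Complex.norm_exp_ofReal_mul_I]

/-- for `ρ ∈ (0,1]`, `T > 0`, `τ > N/(2m)`, and `Ψ` with
`Σ (A(n)+1)^{2(τ+1)}|Ψ_n|² < ∞`, the series
`f¹(x) = Σ Ψ_n / (T^ρ E_{ρ,ρ+1}(−A(n)T^ρ)) e^{inx}` converges absolutely and uniformly
on `𝕋^N` and `‖f¹‖²_{C(𝕋^N)} ≤ C Σ (A(n)+1)^{2(τ+1)}|Ψ_n|²`. -/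
theorem stmt12 (N m : ℕ) (hN : 0 < N) (hm : 0 < m) (ρ T : ℝ)
    (hρ : 0 < ρ) (hρ1 : ρ ≤ 1) (hT : 0 < T)
    (c₁ c₂ : ℝ) (hc₁ : 0 < c₁) (hc₂ : 0 < c₂)
    (A : (Fin N → ℤ) → ℝ) (hA0 : ∀ n, 0 ≤ A n)
    (hA : ∀ n, c₁ * Real.sqrt (∑ i, ((n i : ℝ)) ^ 2) ^ (m : ℕ) ≤ A n ∧
               A n ≤ c₂ * Real.sqrt (∑ i, ((n i : ℝ)) ^ 2) ^ (m : ℕ))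
    (τ : ℝ) (hτ : (N : ℝ) / (2 * m) < τ) :
    ∃ C : ℝ, 0 < C ∧ ∀ Ψ : (Fin N → ℤ) → ℂ,
      Summable (fun n => (A n + 1) ^ (2 * (τ + 1)) * ‖Ψ n‖ ^ 2) →
      (Summable fun n => ‖Ψ n / ((T ^ ρ * mittagLeffler ρ (ρ + 1) (-A n * T ^ ρ) : ℝ) : ℂ)‖) ∧
      ∃ f₁ : (Fin N → ℝ) → ℂ, Continuous f₁ ∧
        TendstoUniformly
          (fun (s : Finset (Fin N → ℤ)) (x : Fin N → ℝ) =>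
            ∑ n ∈ s, Ψ n / ((T ^ ρ * mittagLeffler ρ (ρ + 1) (-A n * T ^ ρ) : ℝ) : ℂ)
              * charFun n x)
          f₁ atTop ∧
        (∀ x, HasSum
          (fun n => Ψ n / ((T ^ ρ * mittagLeffler ρ (ρ + 1) (-A n * T ^ ρ) : ℝ) : ℂ)
            * charFun n x) (f₁ x)) ∧
        ∀ x, ‖f₁ x‖ ^ 2 ≤ C * ∑' n, (A n + 1) ^ (2 * (τ + 1)) * ‖Ψ n‖ ^ 2 := by
  have hτ0 : 0 < τ := lt_of_le_of_lt (by positivity) hτ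
  obtain ⟨c, hc, hE⟩ := ml_lower hρ hρ1
  have hP : 0 < T ^ ρ := Real.rpow_pos_of_pos hT ρ
  have hS := ml_symbol_summable N m hm c₁ hc₁ A hA0 (fun n => (hA n).1) τ hτ
  set K : ℝ := (1 + T ^ ρ) / (T ^ ρ * c) with hK
  have hK0 : 0 < K := by positivity
  have hB : ∀ n, 0 < A n + 1 := fun n => by linarith [hA0 n]
  have hf2 : ∀ n, (K * (A n + 1) ^ (-τ)) ^ 2 = K ^ 2 * (A n + 1) ^ (-(2 * τ)) := by
    intro n
    rw [mul_pow, ← Real.rpow_natCast (_ ^ (-τ)), ← Real.rpow_mul (hB n).le]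
    congr 2
    push_cast; ring
  refine ⟨K ^ 2 * (∑' n, (A n + 1) ^ (-(2 * τ))) + 1, ?_, ?_⟩
  · have : 0 ≤ ∑' n, (A n + 1) ^ (-(2 * τ)) := tsum_nonneg fun n => Real.rpow_nonneg (hB n).le _
    positivity
  intro Ψ hΨ
  have hg2 : ∀ n, ((A n + 1) ^ (τ + 1) * ‖Ψ n‖) ^ 2 = (A n + 1) ^ (2 * (τ + 1)) * ‖Ψ n‖ ^ 2 := by
    intro n
    rw [mul_pow, ← Real.rpow_natCast (_ ^ (τ + 1)), ← Real.rpow_mul (hB n).le]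
    congr 2
    push_cast; ring
  obtain ⟨hsum, hcs⟩ := ml_cs (f := fun n => K * (A n + 1) ^ (-τ))
    (g := fun n => (A n + 1) ^ (τ + 1) * ‖Ψ n‖)
    (fun n => mul_nonneg hK0.le (Real.rpow_nonneg (hB n).le _))
    (fun n => mul_nonneg (Real.rpow_nonneg (hB n).le _) (norm_nonneg _))
    (by simp_rw [hf2]; exact hS.mul_left _) (by simp_rw [hg2]; exact hΨ)
  simp_rw [hf2, hg2] at hcs
  rw [tsum_mul_left] at hcs
  have hbd : ∀ n, ‖Ψ n / ((T ^ ρ * mittagLeffler ρ (ρ + 1) (-A n * T ^ ρ) : ℝ) : ℂ)‖ ≤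
      K * (A n + 1) ^ (-τ) * ((A n + 1) ^ (τ + 1) * ‖Ψ n‖) := by
    intro n
    have hx : 0 ≤ A n * T ^ ρ := mul_nonneg (hA0 n) hP.le
    have h1 := hE _ hx
    rw [← neg_mul] at h1
    set E := mittagLeffler ρ (ρ + 1) (-A n * T ^ ρ)
    have hEpos : 0 < E := by
      by_contra! h
      nlinarith
    have e1 : (A n + 1) ^ (-τ) * (A n + 1) ^ (τ + 1) = A n + 1 := by
      rw [← Real.rpow_add (hB n)]; simp
    rw [norm_div, Complex.norm_real, Real.norm_of_nonneg (mul_pos hP hEpos).le]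
    have e3 : K * (A n + 1) ^ (-τ) * ((A n + 1) ^ (τ + 1) * ‖Ψ n‖) = K * (A n + 1) * ‖Ψ n‖ := by
      calc _ = K * ((A n + 1) ^ (-τ) * (A n + 1) ^ (τ + 1)) * ‖Ψ n‖ := by ring
        _ = _ := by rw [e1]
    rw [e3, div_le_iff₀ (mul_pos hP hEpos)]
    have e4 : 1 ≤ K * (A n + 1) * (T ^ ρ * E) := by
      have e5 : K * (A n + 1) * (T ^ ρ * E) = (1 + T ^ ρ) * (A n + 1) * E / c := by
        rw [hK]; field_simp
      rw [e5, le_div_iff₀ hc, one_mul]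
      refine h1.trans (mul_le_mul_of_nonneg_right ?_ hEpos.le)
      nlinarith [hA0 n]
    nlinarith [norm_nonneg (Ψ n)]
  have habs : Summable fun n =>
      ‖Ψ n / ((T ^ ρ * mittagLeffler ρ (ρ + 1) (-A n * T ^ ρ) : ℝ) : ℂ)‖ :=
    Summable.of_nonneg_of_le (fun n => norm_nonneg _) hbd hsum
  refine ⟨habs, ?_⟩
  set a : (Fin N → ℤ) → ℂ :=
    fun n => Ψ n / ((T ^ ρ * mittagLeffler ρ (ρ + 1) (-A n * T ^ ρ) : ℝ) : ℂ) with ha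
  have hn : ∀ n x, ‖a n * charFun n x‖ = ‖a n‖ := by
    intro n x
    rw [norm_mul, ml_char_norm, mul_one]
  have hsx : ∀ x, Summable fun n => a n * charFun n x := by
    intro x
    apply Summable.of_norm
    simp_rw [hn]
    exact habs
  refine ⟨fun x => ∑' n, a n * charFun n x, ?_, ?_, ?_, ?_⟩
  · apply continuous_tsum (u := fun n => ‖a n‖) _ habs (fun n x => (hn n x).le)
    intro n
    unfold charFun
    fun_prop
  · exact tendstoUniformly_tsum habs (fun n x => (hn n x).le)
  · intro x
    exact (hsx x).hasSum
  · intro x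
    have h1 : ‖∑' n, a n * charFun n x‖ ≤
        ∑' n, K * (A n + 1) ^ (-τ) * ((A n + 1) ^ (τ + 1) * ‖Ψ n‖) :=
      tsum_of_norm_bounded hsum.hasSum (fun n => (hn n x).le.trans (hbd n))
    have h2 : 0 ≤ ∑' n, (A n + 1) ^ (2 * (τ + 1)) * ‖Ψ n‖ ^ 2 :=
      tsum_nonneg fun n => mul_nonneg (Real.rpow_nonneg (hB n).le _) (sq_nonneg _)
    have h3 := pow_le_pow_left₀ (norm_nonneg _) h1 2
    refine (h3.trans hcs).trans ?_
    rw [add_mul, one_mul]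
    linarith
end

section
/- For ρ ∈ (0,1] and λ ≥ 0, the function t ↦ t^ρ E_{ρ,ρ+1}(−λ t^ρ) is continuous on [0,∞), vanishes at t = 0, and is nondecreasing in t; in particular t^ρ E_{ρ,ρ+1}(−λ t^ρ) > 0 for t > 0. -/
open Filter Topology Finset

namespace ML17

noncomputable def P (n : ℕ) (a : ℝ) : ℝ := ∏ j ∈ range n, (1 + a / ((j : ℝ) + 1))
noncomputable def Q (n : ℕ) (a : ℝ) : ℝ := ∏ j ∈ range n, ((a + j) / ((j : ℝ) + 1))

lemma P_succ (n : ℕ) (a : ℝ) : P (n + 1) a = P n a * (1 + a / ((n : ℝ) + 1)) := by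
  simp [P, prod_range_succ]

lemma Q_succ (n : ℕ) (a : ℝ) : ((n : ℝ) + 1) * Q (n + 1) a = (a + n) * Q n a := by
  have : (n : ℝ) + 1 ≠ 0 := by positivity
  simp only [Q, prod_range_succ]
  field_simp

lemma P_sub (n : ℕ) (a : ℝ) : P (n + 1) a - P n a = Q (n + 1) a := by
  induction n with
  | zero => simp [P, Q]
  | succ n ih =>
    have h1 := P_succ (n + 1) a
    have h2 := Q_succ (n + 1) a
    have h3 := P_succ n a
    have e1 : (n : ℝ) + 1 ≠ 0 := by positivity
    have e2 : (n : ℝ) + 1 + 1 ≠ 0 := by positivity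
    push_cast at *
    have : P n a * a = ((n : ℝ) + 1) * Q (n + 1) a := by
      rw [← ih, h3]; field_simp; ring
    apply mul_left_cancel₀ e2
    rw [h2, h1]
    field_simp
    have h5 : P (n + 1) a = P n a + Q (n + 1) a := by linarith
    rw [h5]
    linear_combination this

lemma conv (n : ℕ) (a b : ℝ) :
    ∑ p ∈ antidiagonal n, Q p.1 a * Q p.2 b = Q n (a + b) := by
  induction n with
  | zero => simp [Q]
  | succ n ih =>
    have e1 : (n : ℝ) + 1 ≠ 0 := by positivity
    apply mul_left_cancel₀ e1
    rw [Q_succ, ← ih, mul_sum, mul_sum]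
    have h1 : ∑ p ∈ antidiagonal (n + 1), ((n : ℝ) + 1) * (Q p.1 a * Q p.2 b)
        = ∑ p ∈ antidiagonal (n + 1), (p.1 : ℝ) * Q p.1 a * Q p.2 b
          + ∑ p ∈ antidiagonal (n + 1), Q p.1 a * ((p.2 : ℝ) * Q p.2 b) := by
      rw [← sum_add_distrib]
      apply sum_congr rfl
      intro p hp
      have : ((p.1 + p.2 : ℕ) : ℝ) = ((n + 1 : ℕ) : ℝ) := by rw [mem_antidiagonal.1 hp]
      push_cast at this
      rw [← this]; ring
    rw [h1, Nat.sum_antidiagonal_succ, Nat.sum_antidiagonal_succ']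
    simp only [Nat.cast_zero, zero_mul, mul_zero, zero_add]
    rw [← sum_add_distrib]
    apply sum_congr rfl
    intro p hp
    have : ((p.1 + p.2 : ℕ) : ℝ) = (n : ℝ) := by rw [mem_antidiagonal.1 hp]
    push_cast at this ⊢
    rw [← this, Q_succ, Q_succ]; ring

lemma Q_zero_right (n : ℕ) : Q (n + 1) 0 = 0 := by
  simp [Q, prod_range_succ']

lemma Q_neg (n : ℕ) {r : ℝ} (h0 : 0 < r) (h1 : r ≤ 1) : Q (n + 1) (-r) ≤ 0 := by
  simp only [Q, prod_range_succ']
  apply mul_nonpos_of_nonneg_of_nonpos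
  · apply prod_nonneg
    intro j _
    push_cast
    have : (0 : ℝ) ≤ j := by positivity
    apply div_nonneg <;> linarith
  · simp; exact h0.le

lemma P_nonneg (n : ℕ) {a : ℝ} (ha : 0 ≤ a) : 0 ≤ P n a :=
  prod_nonneg fun j _ => by positivity

lemma Q_nonneg (n : ℕ) {a : ℝ} (ha : 0 ≤ a) : 0 ≤ Q n a :=
  prod_nonneg fun j _ => by positivity

lemma P_le (n : ℕ) {a : ℝ} (ha : 0 ≤ a) : P n a ≤ (1 + a) ^ n := by
  have h : P n a ≤ ∏ _j ∈ range n, (1 + a) := by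
    apply Finset.prod_le_prod
    · intro j _; positivity
    · intro j _
      have : a / ((j : ℝ) + 1) ≤ a := div_le_self ha (by linarith [(Nat.cast_nonneg j : (0 : ℝ) ≤ j)])
      linarith
  simpa using h

lemma Q_le (n : ℕ) {a : ℝ} (ha : 0 ≤ a) : Q n a ≤ (1 + a) ^ n := by
  refine le_trans ?_ (P_le n ha)
  cases n with
  | zero => simp [P, Q]
  | succ n => rw [← P_sub]; linarith [P_nonneg n ha]

lemma P_bound {m n : ℕ} (hm : 1 ≤ m) (hn : m ≤ n) {a : ℝ} (ha : 0 ≤ a) :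
    P n a ≤ (1 + a) ^ m * ((n : ℝ) / m) ^ a := by
  induction n, hn using Nat.le_induction with
  | base =>
    have : (m : ℝ) ≠ 0 := by positivity
    rw [div_self this, Real.one_rpow, mul_one]
    exact P_le m ha
  | succ n hn ih =>
    have hm0 : (0 : ℝ) < m := by exact_mod_cast hm
    have hn0 : (0 : ℝ) < n := by exact_mod_cast (hm.trans hn)
    rw [P_succ]
    have key : 1 + a / ((n : ℝ) + 1) ≤ (((n : ℝ) + 1) / n) ^ a := by
      have hpos : 0 < ((n : ℝ) + 1) / n := by positivity
      rw [Real.rpow_def_of_pos hpos]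
      have hl := Real.one_sub_inv_le_log_of_pos hpos
      have e : 1 - (((n : ℝ) + 1) / n)⁻¹ = 1 / ((n : ℝ) + 1) := by field_simp; ring
      rw [e] at hl
      have h2 := mul_le_mul_of_nonneg_right hl ha
      have h3 := Real.add_one_le_exp (Real.log (((n : ℝ) + 1) / n) * a)
      have e4 : a / ((n : ℝ) + 1) = 1 / ((n : ℝ) + 1) * a := by ring
      linarith
    calc P n a * (1 + a / ((n : ℝ) + 1))
        ≤ ((1 + a) ^ m * ((n : ℝ) / m) ^ a) * (((n : ℝ) + 1) / n) ^ a := by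
          apply mul_le_mul ih key (by positivity) (by positivity)
      _ = (1 + a) ^ m * (((n + 1 : ℕ) : ℝ) / m) ^ a := by
          rw [mul_assoc, ← Real.mul_rpow (by positivity) (by positivity)]
          congr 2
          push_cast
          field_simp

lemma P_eq (n : ℕ) (hn : n ≠ 0) {a : ℝ} (ha : 0 < a) :
    P n a = (n : ℝ) ^ a / (a * Real.GammaSeq a n) := by
  have hn0 : (0 : ℝ) < n := by positivity
  have h1 : (∏ j ∈ range (n + 1), (a + (j : ℝ))) = a * n.factorial * P n a := by
    rw [prod_range_succ']
    have : (n.factorial : ℝ) = ∏ j ∈ range n, ((j : ℝ) + 1) := by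
      rw [← prod_range_add_one_eq_factorial]; push_cast; rfl
    rw [this, P, mul_assoc, ← prod_mul_distrib]
    simp only [Nat.cast_zero, add_zero]
    rw [mul_comm]
    congr 1
    apply prod_congr rfl
    intro j _
    have : (j : ℝ) + 1 ≠ 0 := by positivity
    push_cast
    field_simp
    ring
  have hP : 0 < P n a := prod_pos fun j _ => by positivity
  have hf : (0 : ℝ) < n.factorial := by exact_mod_cast n.factorial_pos
  have hna : 0 < (n : ℝ) ^ a := by positivity
  rw [Real.GammaSeq, h1]
  field_simp

lemma P_tendsto {a : ℝ} (ha : 0 < a) :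
    Tendsto (fun n : ℕ => P n a / (n : ℝ) ^ a) atTop (𝓝 (1 / Real.Gamma (a + 1))) := by
  have h := (Real.GammaSeq_tendsto_Gamma a).const_mul a
  rw [← Real.Gamma_add_one ha.ne'] at h
  have h2 := h.inv₀ (Real.Gamma_pos_of_pos (by linarith)).ne'
  rw [one_div]
  refine h2.congr' ?_
  filter_upwards [eventually_ne_atTop 0] with n hn
  have hn0 : (0 : ℝ) < n := by positivity
  have hna : 0 < (n : ℝ) ^ a := by positivity
  rw [P_eq n hn ha]
  field_simp

lemma inv_Gamma_le {m : ℕ} (hm : 1 ≤ m) {a : ℝ} (ha : 0 < a) :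
    1 / Real.Gamma (a + 1) ≤ (1 + a) ^ m * (1 / (m : ℝ)) ^ a := by
  refine le_of_tendsto (P_tendsto ha) ?_
  filter_upwards [eventually_ge_atTop m] with n hn
  have hm0 : (0 : ℝ) < m := by exact_mod_cast hm
  have hn0 : (0 : ℝ) < n := by exact_mod_cast (hm.trans hn)
  have hna : 0 < (n : ℝ) ^ a := by positivity
  rw [div_le_iff₀ hna, mul_assoc, ← Real.mul_rpow (by positivity) (by positivity)]
  refine (P_bound hm hn ha.le).trans (le_of_eq ?_)
  congr 2
  ring

lemma summable_aux (r : ℝ) (h0 : 0 ≤ r) (h1 : r ≤ 1) (m : ℕ) {q : ℝ} (hq0 : 0 ≤ q) (hq : q < 1) :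
    Summable (fun k : ℕ => (1 + r * ((k : ℝ) + 1)) ^ m * q ^ k) := by
  have h := summable_pow_mul_geometric_of_norm_lt_one m
    (show ‖(q + 1) / 2‖ < 1 by rw [Real.norm_of_nonneg (by positivity)]; linarith)
  have h' := ((summable_nat_add_iff 2).2 h).mul_right (((q + 1) / 2) ^ 2)⁻¹
  refine Summable.of_nonneg_of_le (fun k => by positivity) (fun k => ?_) h'
  have e : ((k + 2 : ℕ) : ℝ) ^ m * ((q + 1) / 2) ^ (k + 2) * (((q + 1) / 2) ^ 2)⁻¹
      = ((k : ℝ) + 2) ^ m * ((q + 1) / 2) ^ k := by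
    have : ((q + 1) / 2) ≠ 0 := by positivity
    push_cast
    rw [pow_add]
    field_simp
  rw [e]
  have hk : r * ((k : ℝ) + 1) ≤ 1 * ((k : ℝ) + 1) := by gcongr
  have hA : 1 + r * ((k : ℝ) + 1) ≤ (k : ℝ) + 2 := by linarith
  have hB : q ≤ (q + 1) / 2 := by linarith
  exact mul_le_mul (pow_le_pow_left₀ (by positivity) hA m) (pow_le_pow_left₀ hq0 hB k)
    (by positivity) (by positivity)

section R
variable (r lam H : ℝ)

noncomputable def R (n : ℕ) : ℝ := ∑' k : ℕ, (-lam) ^ k * H ^ (k + 1) * Q n (r * ((k : ℝ) + 1))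
noncomputable def S (n : ℕ) : ℝ := ∑' k : ℕ, (-lam) ^ k * H ^ (k + 1) * P n (r * ((k : ℝ) + 1))

variable {r lam H}

lemma summable_gen (h0 : 0 < r) (h1 : r ≤ 1) (hl : 0 ≤ lam) (hH : 0 < H) (hlH : lam * H < 1)
    (n : ℕ) (G : ℝ → ℝ) (hG0 : ∀ a, 0 ≤ a → 0 ≤ G a)
    (hG : ∀ a, 0 ≤ a → G a ≤ (1 + a) ^ n) :
    Summable (fun k : ℕ => (-lam) ^ k * H ^ (k + 1) * G (r * ((k : ℝ) + 1))) := by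
  have h := (summable_aux r h0.le h1 n (q := lam * H) (by positivity) hlH).mul_left H
  refine Summable.of_norm_bounded h (fun k => ?_)
  have ha : 0 ≤ r * ((k : ℝ) + 1) := by positivity
  rw [norm_mul, norm_mul, norm_pow, norm_pow, norm_neg, Real.norm_of_nonneg hl,
    Real.norm_of_nonneg hH.le, Real.norm_of_nonneg (hG0 _ ha)]
  calc _ ≤ lam ^ k * H ^ (k + 1) * (1 + r * ((k : ℝ) + 1)) ^ n := by
        gcongr; exact hG _ ha
    _ = _ := by rw [mul_pow]; ring

lemma summable_R (h0 : 0 < r) (h1 : r ≤ 1) (hl : 0 ≤ lam) (hH : 0 < H) (hlH : lam * H < 1)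
    (n : ℕ) :
    Summable (fun k : ℕ => (-lam) ^ k * H ^ (k + 1) * Q n (r * ((k : ℝ) + 1))) :=
  summable_gen h0 h1 hl hH hlH n (Q n) (fun _ h => Q_nonneg n h) (fun _ h => Q_le n h)

lemma summable_S (h0 : 0 < r) (h1 : r ≤ 1) (hl : 0 ≤ lam) (hH : 0 < H) (hlH : lam * H < 1)
    (n : ℕ) :
    Summable (fun k : ℕ => (-lam) ^ k * H ^ (k + 1) * P n (r * ((k : ℝ) + 1))) :=
  summable_gen h0 h1 hl hH hlH n (P n) (fun _ h => P_nonneg n h) (fun _ h => P_le n h)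

lemma S_sub (h0 : 0 < r) (h1 : r ≤ 1) (hl : 0 ≤ lam) (hH : 0 < H) (hlH : lam * H < 1)
    (n : ℕ) : S r lam H (n + 1) - S r lam H n = R r lam H (n + 1) := by
  rw [S, S, R, ← (summable_S h0 h1 hl hH hlH (n + 1)).tsum_sub (summable_S h0 h1 hl hH hlH n)]
  congr 1
  ext k
  rw [← P_sub]; ring

lemma R_rec (h0 : 0 < r) (h1 : r ≤ 1) (hl : 0 ≤ lam) (hH : 0 < H) (hlH : lam * H < 1)
    (n : ℕ) : ∑ p ∈ antidiagonal n, Q p.1 (-r) * R r lam H p.2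
    = H * Q n 0 - lam * H * R r lam H n := by
  have hs := fun p : ℕ × ℕ => (summable_R h0 h1 hl hH hlH p.2).mul_left (Q p.1 (-r))
  have e1 : ∑ p ∈ antidiagonal n, Q p.1 (-r) * R r lam H p.2
      = ∑' k : ℕ, (-lam) ^ k * H ^ (k + 1) * Q n (r * k) := by
    simp only [R, ← tsum_mul_left]
    rw [← Summable.tsum_finsetSum (fun p _ => hs p)]
    congr 1
    ext k
    have : r * (k : ℝ) = -r + r * ((k : ℝ) + 1) := by ring
    rw [this, ← conv, mul_sum]
    apply sum_congr rfl
    intro p _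
    ring
  have hsum : Summable (fun k : ℕ => (-lam) ^ k * H ^ (k + 1) * Q n (r * k)) := by
    rw [← summable_nat_add_iff 1]
    refine ((summable_R h0 h1 hl hH hlH n).mul_left (-lam * H)).congr (fun k => ?_)
    push_cast; ring
  rw [e1, hsum.tsum_eq_zero_add, R, ← tsum_mul_left, sub_eq_add_neg, ← tsum_neg]
  congr 1
  · simp
  · congr 1
    ext k
    push_cast; ring

lemma R_nonneg (h0 : 0 < r) (h1 : r ≤ 1) (hl : 0 ≤ lam) (hH : 0 < H) (hlH : lam * H < 1)
    (n : ℕ) : 0 ≤ R r lam H n := by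
  induction n using Nat.strong_induction_on with
  | _ n ih =>
    have hrec := R_rec h0 h1 hl hH hlH n
    have hpos : 0 < 1 + lam * H := by positivity
    cases n with
    | zero =>
      simp [Q] at hrec
      by_contra hc
      push Not at hc
      nlinarith
    | succ n =>
      rw [Nat.sum_antidiagonal_succ, Q_zero_right] at hrec
      have hle : ∑ p ∈ antidiagonal n, Q (p.1 + 1) (-r) * R r lam H p.2 ≤ 0 := by
        apply sum_nonpos
        intro p hp
        apply mul_nonpos_of_nonpos_of_nonneg (Q_neg _ h0 h1)
        apply ih
        have := mem_antidiagonal.1 hp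
        omega
      have hq0 : Q 0 (-r) = 1 := by simp [Q]
      simp only [hq0] at hrec
      by_contra hc
      push Not at hc
      nlinarith

lemma S_mono (h0 : 0 < r) (h1 : r ≤ 1) (hl : 0 ≤ lam) (hH : 0 < H) (hlH : lam * H < 1)
    : Monotone (S r lam H) :=
  monotone_nat_of_le_succ fun n => by
    have := S_sub h0 h1 hl hH hlH n
    have := R_nonneg h0 h1 hl hH hlH (n + 1)
    linarith

end R

lemma exists_m (r : ℝ) (h0 : 0 < r) (C : ℝ) :
    ∃ m : ℕ, 1 ≤ m ∧ C * (1 / (m : ℝ)) ^ r ≤ 1 / 2 := by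
  have h : Tendsto (fun m : ℕ => C * (1 / (m : ℝ)) ^ r) atTop (𝓝 (C * 0 ^ r)) :=
    ((tendsto_one_div_atTop_nhds_zero_nat (𝕜 := ℝ)).rpow_const (Or.inr h0.le)).const_mul C
  rw [Real.zero_rpow h0.ne', mul_zero] at h
  obtain ⟨m, hm1, hm2⟩ := ((eventually_ge_atTop 1).and
    (h.eventually (ge_mem_nhds (show (0 : ℝ) < 1 / 2 by norm_num)))).exists
  exact ⟨m, hm1, hm2⟩

lemma rpow_a {x r : ℝ} (hx : 0 ≤ x) (k : ℕ) : x ^ (r * ((k : ℝ) + 1)) = (x ^ r) ^ (k + 1) := by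
  rw [Real.rpow_mul hx, ← Nat.cast_succ, Real.rpow_natCast]

lemma ml_continuous (r : ℝ) (h0 : 0 < r) (h1 : r ≤ 1) : Continuous (mittagLeffler r (r + 1)) := by
  rw [continuous_iff_continuousAt]
  intro z
  obtain ⟨m, hm, hC⟩ := exists_m r h0 (|z| + 1)
  have hm0 : (0 : ℝ) < m := by exact_mod_cast hm
  have hb := (summable_aux r h0.le h1 m (q := 1 / 2) (by norm_num) (by norm_num)).mul_right
    ((1 / (m : ℝ)) ^ r)
  have hc : ContinuousOn (mittagLeffler r (r + 1)) (Metric.ball z 1) := by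
    refine continuousOn_tsum (fun k => by fun_prop) hb (fun k x hx => ?_)
    have hx' : |x| ≤ |z| + 1 := by
      have h2 := abs_sub_abs_le_abs_sub x z
      rw [Metric.mem_ball, Real.dist_eq] at hx
      linarith
    have ha : 0 < r * ((k : ℝ) + 1) := by positivity
    have hG := inv_Gamma_le hm ha
    have e : r * (k : ℝ) + (r + 1) = r * ((k : ℝ) + 1) + 1 := by ring
    rw [rpow_a (by positivity)] at hG
    have hGp := Real.Gamma_pos_of_pos (show 0 < r * ((k : ℝ) + 1) + 1 by linarith)
    rw [e, norm_div, norm_pow, Real.norm_of_nonneg hGp.le, Real.norm_eq_abs, div_eq_mul_one_div]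
    have hw : 0 ≤ (1 / (m : ℝ)) ^ r := by positivity
    calc _ ≤ (|z| + 1) ^ k * ((1 + r * ((k : ℝ) + 1)) ^ m * ((1 / (m : ℝ)) ^ r) ^ (k + 1)) := by
          gcongr
      _ = (1 + r * ((k : ℝ) + 1)) ^ m * ((|z| + 1) * (1 / (m : ℝ)) ^ r) ^ k
            * (1 / (m : ℝ)) ^ r := by rw [mul_pow]; ring
      _ ≤ _ := by gcongr
  exact hc.continuousAt (Metric.ball_mem_nhds z one_pos)

lemma S_tendsto {r lam t : ℝ} (h0 : 0 < r) (h1 : r ≤ 1) (hl : 0 ≤ lam) (ht : 0 < t) :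
    Tendsto (fun N : ℕ => S r lam ((1 / (N : ℝ)) ^ r) ⌊t * N⌋₊) atTop
      (𝓝 (t ^ r * mittagLeffler r (r + 1) (-lam * t ^ r))) := by
  obtain ⟨m, hm, hC⟩ := exists_m r h0 (lam * t ^ r)
  have hm0 : (0 : ℝ) < m := by exact_mod_cast hm
  have hb := (summable_aux r h0.le h1 m (q := 1 / 2) (by norm_num) (by norm_num)).mul_right
    (t ^ r * (1 / (m : ℝ)) ^ r)
  have hfl : Tendsto (fun N : ℕ => ⌊t * (N : ℝ)⌋₊) atTop atTop :=
    tendsto_nat_floor_atTop.comp (tendsto_natCast_atTop_atTop.const_mul_atTop ht)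
  have hfr : Tendsto (fun N : ℕ => (⌊t * (N : ℝ)⌋₊ : ℝ) / N) atTop (𝓝 t) :=
    (tendsto_nat_floor_mul_div_atTop ht.le).comp tendsto_natCast_atTop_atTop
  have e : t ^ r * mittagLeffler r (r + 1) (-lam * t ^ r) = ∑' k : ℕ,
      (-lam) ^ k * (t ^ (r * ((k : ℝ) + 1)) * (1 / Real.Gamma (r * ((k : ℝ) + 1) + 1))) := by
    rw [mittagLeffler, ← tsum_mul_left]
    congr 1
    ext k
    rw [rpow_a ht.le, show r * (k : ℝ) + (r + 1) = r * ((k : ℝ) + 1) + 1 by ring, mul_pow]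
    ring
  rw [e]
  refine tendsto_tsum_of_dominated_convergence hb (fun k => ?_) ?_
  · have ha : 0 < r * ((k : ℝ) + 1) := by positivity
    have hA := (hfr.rpow_const (p := r * ((k : ℝ) + 1)) (Or.inr ha.le)).mul
      ((P_tendsto ha).comp hfl)
    refine (hA.const_mul ((-lam) ^ k)).congr' ?_
    filter_upwards [hfl.eventually_ge_atTop 1, eventually_ge_atTop 1] with N hN hN1
    have hn0 : (0 : ℝ) < ⌊t * (N : ℝ)⌋₊ := by exact_mod_cast hN
    have hN0 : (0 : ℝ) < N := by exact_mod_cast hN1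
    rw [← rpow_a (by positivity), div_eq_mul_one_div _ (N : ℝ),
      Real.mul_rpow hn0.le (by positivity)]
    have : (0 : ℝ) < (⌊t * (N : ℝ)⌋₊ : ℝ) ^ (r * ((k : ℝ) + 1)) := by positivity
    simp only [Function.comp_apply]
    generalize (1 / (N : ℝ)) ^ (r * ((k : ℝ) + 1)) = w
    field_simp
  · filter_upwards [hfl.eventually_ge_atTop m, eventually_ge_atTop 1] with N hN hN1 k
    have hN0 : (0 : ℝ) < N := by exact_mod_cast hN1
    have ha : 0 ≤ r * ((k : ℝ) + 1) := by positivity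
    have hP := P_bound hm hN ha
    have hle : (⌊t * (N : ℝ)⌋₊ : ℝ) ≤ t * N := Nat.floor_le (by positivity)
    have hw : 0 ≤ (1 / (m : ℝ)) ^ r := by positivity
    rw [norm_mul, norm_mul, norm_pow, norm_pow, norm_neg, Real.norm_of_nonneg hl,
      Real.norm_of_nonneg (by positivity : 0 ≤ (1 / (N : ℝ)) ^ r),
      Real.norm_of_nonneg (P_nonneg _ ha)]
    calc _ ≤ lam ^ k * ((1 / (N : ℝ)) ^ r) ^ (k + 1) *
            ((1 + r * ((k : ℝ) + 1)) ^ m * (t * N / m) ^ (r * ((k : ℝ) + 1))) := by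
          refine mul_le_mul_of_nonneg_left (hP.trans ?_) (by positivity)
          gcongr
      _ = lam ^ k * (1 + r * ((k : ℝ) + 1)) ^ m *
            ((1 / (N : ℝ)) ^ (r * ((k : ℝ) + 1)) * (t * N / m) ^ (r * ((k : ℝ) + 1))) := by
          rw [← rpow_a (by positivity)]; ring
      _ = lam ^ k * (1 + r * ((k : ℝ) + 1)) ^ m * (t ^ r * (1 / (m : ℝ)) ^ r) ^ (k + 1) := by
          rw [← Real.mul_rpow (by positivity) (by positivity),
            ← Real.mul_rpow (by positivity) (by positivity), ← rpow_a (by positivity)]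
          congr 2
          field_simp
      _ = (1 + r * ((k : ℝ) + 1)) ^ m * (lam * t ^ r * (1 / (m : ℝ)) ^ r) ^ k
            * (t ^ r * (1 / (m : ℝ)) ^ r) := by
          rw [mul_pow (lam * t ^ r), mul_pow lam]; ring
      _ ≤ _ := by gcongr

lemma F_mono {r lam s t : ℝ} (h0 : 0 < r) (h1 : r ≤ 1) (hl : 0 ≤ lam) (hs : 0 < s) (hst : s ≤ t) :
    s ^ r * mittagLeffler r (r + 1) (-lam * s ^ r)
      ≤ t ^ r * mittagLeffler r (r + 1) (-lam * t ^ r) := by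
  refine le_of_tendsto_of_tendsto (S_tendsto h0 h1 hl hs)
    (S_tendsto h0 h1 hl (hs.trans_le hst)) ?_
  obtain ⟨m, hm, hC⟩ := exists_m r h0 lam
  filter_upwards [eventually_ge_atTop m] with N hN
  have hm0 : (0 : ℝ) < m := by exact_mod_cast hm
  have hN0 : (0 : ℝ) < N := by exact_mod_cast hm.trans hN
  have hlt : lam * (1 / (N : ℝ)) ^ r < 1 := by
    have : lam * (1 / (N : ℝ)) ^ r ≤ lam * (1 / (m : ℝ)) ^ r := by gcongr
    linarith
  apply S_mono h0 h1 hl (by positivity) hlt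
  gcongr

end ML17

/-- for `ρ ∈ (0,1]` and `λ ≥ 0`, the function
`F(t) = t^ρ E_{ρ,ρ+1}(−λ t^ρ)` is continuous on `[0,∞)`, vanishes at `0`, is
nondecreasing on `[0,∞)`, and is positive for `t > 0`. -/
theorem stmt17 (ρ lam : ℝ) (hρ : 0 < ρ) (hρ1 : ρ ≤ 1) (hlam : 0 ≤ lam) :
    ContinuousOn (fun t : ℝ => t ^ ρ * mittagLeffler ρ (ρ + 1) (-lam * t ^ ρ)) (Set.Ici 0) ∧
    (0 : ℝ) ^ ρ * mittagLeffler ρ (ρ + 1) (-lam * (0 : ℝ) ^ ρ) = 0 ∧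
    MonotoneOn (fun t : ℝ => t ^ ρ * mittagLeffler ρ (ρ + 1) (-lam * t ^ ρ)) (Set.Ici 0) ∧
    ∀ t : ℝ, 0 < t → 0 < t ^ ρ * mittagLeffler ρ (ρ + 1) (-lam * t ^ ρ) := by
  have hp : Continuous (fun t : ℝ => t ^ ρ) := Real.continuous_rpow_const hρ.le
  have hE : Continuous (fun t : ℝ => mittagLeffler ρ (ρ + 1) (-lam * t ^ ρ)) :=
    (ML17.ml_continuous ρ hρ hρ1).comp (hp.const_mul (-lam))
  have hz : (0 : ℝ) ^ ρ * mittagLeffler ρ (ρ + 1) (-lam * (0 : ℝ) ^ ρ) = 0 := by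
    rw [Real.zero_rpow hρ.ne', zero_mul]
  have hpos : ∀ t : ℝ, 0 < t → 0 < t ^ ρ * mittagLeffler ρ (ρ + 1) (-lam * t ^ ρ) := by
    intro t ht
    have hE0 : 0 < mittagLeffler ρ (ρ + 1) (-lam * (0 : ℝ) ^ ρ) := by
      rw [Real.zero_rpow hρ.ne', mul_zero, mittagLeffler, tsum_eq_single 0]
      · simp
        exact Real.Gamma_pos_of_pos (by linarith)
      · intro k hk
        simp [hk]
    have hev : ∀ᶠ s in 𝓝[>] (0 : ℝ), 0 < mittagLeffler ρ (ρ + 1) (-lam * s ^ ρ) :=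
      nhdsWithin_le_nhds ((hE.tendsto 0).eventually (lt_mem_nhds hE0))
    obtain ⟨s, hs, hs2⟩ := (hev.and (Ioc_mem_nhdsGT ht)).exists
    exact (mul_pos (Real.rpow_pos_of_pos hs2.1 ρ) hs).trans_le
      (ML17.F_mono hρ hρ1 hlam hs2.1 hs2.2)
  refine ⟨(hp.mul hE).continuousOn, hz, ?_, hpos⟩
  intro s hs t ht hst
  rcases eq_or_lt_of_le (show (0 : ℝ) ≤ s from hs) with h | h
  · subst h
    show (0 : ℝ) ^ ρ * mittagLeffler ρ (ρ + 1) (-lam * (0 : ℝ) ^ ρ) ≤ _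
    rw [hz]
    rcases eq_or_lt_of_le hst with h' | h'
    · subst h'
      exact hz.ge
    · exact (hpos t h').le
  · exact ML17.F_mono hρ hρ1 hlam h hst
end
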